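/- Let $m \geq 1$ and $\boldsymbol{\sigma} \in \{0,1\}^m$, and set $N = 2^{m+1}$. Then $L_2(\mathcal{H}_m^{\rm sym}(\boldsymbol{\sigma})) = \frac{1}{N}\left(\frac{\log N}{24 \log 2} + \frac{4}{3} + \frac{2}{N} - \frac{2}{9N^2}\right)^{1/2}$, where $\log$ is the natural logarithm. -/

import Mathlib

/-! Warnock's formula (`warnock`) turns the integral of the squared local discrepancy of `n` points
into a sum over pairs of points minus a single sum, plus `n ^ 2 / 9`.

In centred coordinates `X`, `Y` (`cX`, `cY`) passing from `σ` to `σ*` is `Y ↦ -Y`, and complementing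
all digits is `(X, Y) ↦ (-X, -Y)`. Writing `max` through the absolute value of a difference, these
two symmetries remove all odd terms. The quantities left are the moments `∑ X²`, `∑ Y²`, `∑ X² Y²`
and the pair sums of `|X - X'|`, `|Y - Y'|`, `|X - X'| |Y - Y'|` and `|X + X'| |Y - Y'|`.

Each of these follows by induction on `m`, splitting off the last digit, which is the leading digit
of the first coordinate and the least significant digit of the second one. The new digits therefore
determine the sign of `X - X'` if they differ, and change the sign of `Y - Y'` only if the
remaining digits of both points agree (`cY_sep`), so all absolute values can be resolved.

The shift enters only through `W = ∑ (-1) ^ σ_j`, in `sum_abs_mul_abs_sub` and in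
`sum_cX_sq_mul_cY_sq`; the two contributions cancel in `integral_sym`. -/

open Finset

/-- Distance to the nearest integer. -/
noncomputable def dnn (x : ℝ) : ℝ := |x - round x|

/-- Real value of a bit. -/
def bitr (b : Bool) : ℝ := if b then 1 else 0

/-- First coordinate of a Hammersley point: t_m/2 + ... + t_1/2^m. -/
noncomputable def hamX (m : ℕ) (t : Fin m → Bool) : ℝ :=
  ∑ j : Fin m, bitr (t j) / 2 ^ (m - j.val)

/-- Second coordinate of a shifted Hammersley point: s_1/2 + ... + s_m/2^m with s_j = t_j ⊕ σ_j. -/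
noncomputable def hamY (m : ℕ) (σ t : Fin m → Bool) : ℝ :=
  ∑ j : Fin m, bitr (xor (t j) (σ j)) / 2 ^ (j.val + 1)

/-- Local discrepancy of the shifted Hammersley point set H_m(σ). -/
noncomputable def Δham (m : ℕ) (σ : Fin m → Bool) (α β : ℝ) : ℝ :=
  ((Finset.univ.filter (fun t : Fin m → Bool => hamX m t < α ∧ hamY m σ t < β)).card : ℝ)
    - 2 ^ m * α * β

/-- digit i (1-based) of an m-digit vector, with value false outside 1..m. -/
def dig (m : ℕ) (a : Fin m → Bool) (i : ℕ) : Bool :=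
  if h : 1 ≤ i ∧ i ≤ m then a ⟨i - 1, by omega⟩ else false

/-- The m-bit real number with binary digits a: ∑ a_j 2^{-j}. -/
noncomputable def mval (m : ℕ) (a : Fin m → Bool) : ℝ :=
  ∑ j : Fin m, bitr (a j) / 2 ^ (j.val + 1)

/-- The index function j(u) associated with digits a of α, digits b of β, and shift τ. -/
def jfun (m : ℕ) (a b τ : Fin m → Bool) (u : ℕ) : ℕ :=
  Nat.findGreatest (fun j => dig m a (m + 1 - j) ≠ xor (dig m b j) (dig m τ j)) u

/-- Smallest m-bit number ≥ α. -/
noncomputable def upm (m : ℕ) (α : ℝ) : ℝ := (⌈2 ^ m * α⌉ : ℝ) / 2 ^ m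

/-- Local discrepancy of the symmetrized Hammersley point set H_m(σ) ∪ H_m(σ*) (multiset union). -/
noncomputable def Δsym (m : ℕ) (σ : Fin m → Bool) (α β : ℝ) : ℝ :=
  (((Finset.univ.filter (fun t : Fin m → Bool => hamX m t < α ∧ hamY m σ t < β)).card : ℝ)
    + ((Finset.univ.filter (fun t : Fin m → Bool =>
        hamX m t < α ∧ hamY m (fun j => !(σ j)) t < β)).card : ℝ))
    - 2 ^ (m + 1) * α * β

/-! ### Centred coordinates -/

/-- The sign `±1` of a bit, `true ↦ 1`. -/
def sg (b : Bool) : ℝ := if b then 1 else -1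

/-- The sign `(-1) ^ s` of a shift bit, so that `sg (t ⊕ s) = wt s * sg t`. -/
def wt (s : Bool) : ℝ := if s then -1 else 1

/-- The sum `W` of the signs of the shift, the only way in which `σ` enters the moments below. -/
def Wsum (m : ℕ) (σ : Fin m → Bool) : ℝ := ∑ j, wt (σ j)

/-- First coordinate centred at its mean and doubled, `X = ∑ ±2^{-(m-j)}`; it is odd under
complementing the digits. -/
noncomputable def cX (m : ℕ) (t : Fin m → Bool) : ℝ := 2 * hamX m t - (1 - 1 / 2 ^ m)

/-- Second coordinate centred at its mean and doubled; it is odd under complementing the digits, and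
also under complementing the shift. -/
noncomputable def cY (m : ℕ) (σ t : Fin m → Bool) : ℝ := 2 * hamY m σ t - (1 - 1 / 2 ^ m)

lemma Wsum_succ (m : ℕ) (σ : Fin (m + 1) → Bool) :
    Wsum (m + 1) σ = Wsum m (Fin.init σ) + wt (σ (Fin.last m)) := by
  simp [Wsum, Fin.sum_univ_castSucc, Fin.init]

lemma wt_cases (s : Bool) : wt s = 1 ∨ wt s = -1 := by cases s <;> simp [wt]

lemma hamX_succ (m : ℕ) (t : Fin (m + 1) → Bool) :
    hamX (m + 1) t = (hamX m (Fin.init t) + bitr (t (Fin.last m))) / 2 := by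
  unfold hamX
  rw [Fin.sum_univ_castSucc, add_div, Finset.sum_div]
  congr 1
  · refine Finset.sum_congr rfl fun j _ => ?_
    have : m + 1 - (j.castSucc : Fin (m + 1)).val = (m - j.val) + 1 := by
      have := j.isLt
      simp only [Fin.val_castSucc]; omega
    rw [this, pow_succ, div_div]; rfl
  · simp

lemma hamY_succ (m : ℕ) (σ t : Fin (m + 1) → Bool) :
    hamY (m + 1) σ t = hamY m (Fin.init σ) (Fin.init t)
      + bitr (xor (t (Fin.last m)) (σ (Fin.last m))) / 2 ^ (m + 1) := by
  unfold hamY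
  rw [Fin.sum_univ_castSucc]
  rfl

/-- The last digit is the leading binary digit of the first coordinate. -/
lemma cX_succ (m : ℕ) (t : Fin (m + 1) → Bool) :
    cX (m + 1) t = (cX m (Fin.init t) + sg (t (Fin.last m))) / 2 := by
  unfold cX
  rw [hamX_succ]
  have : (2 : ℝ) ^ m ≠ 0 := by positivity
  cases t (Fin.last m) <;> simp only [bitr, sg, pow_succ] <;> simp <;> field_simp <;> ring

/-- The last digit is the least significant binary digit of the second coordinate. -/
lemma cY_succ (m : ℕ) (σ t : Fin (m + 1) → Bool) :
    cY (m + 1) σ t = cY m (Fin.init σ) (Fin.init t)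
      + wt (σ (Fin.last m)) * sg (t (Fin.last m)) * (1 / 2 ^ (m + 1)) := by
  unfold cY
  rw [hamY_succ]
  have : (2 : ℝ) ^ m ≠ 0 := by positivity
  cases t (Fin.last m) <;> cases σ (Fin.last m) <;>
    simp only [bitr, sg, wt, pow_succ] <;> simp <;> field_simp <;> ring

lemma sg_not (b : Bool) : sg (!b) = -sg b := by cases b <;> simp [sg]

lemma wt_not (b : Bool) : wt (!b) = -wt b := by cases b <;> simp [wt]

lemma init_not (m : ℕ) (t : Fin (m + 1) → Bool) :
    Fin.init (fun j => !(t j)) = fun j : Fin m => !(Fin.init t j) := rfl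

lemma cX_zero (t : Fin 0 → Bool) : cX 0 t = 0 := by simp [cX, hamX]

lemma cY_zero (σ t : Fin 0 → Bool) : cY 0 σ t = 0 := by simp [cY, hamY]

lemma cX_not (m : ℕ) (t : Fin m → Bool) : cX m (fun j => !(t j)) = -cX m t := by
  induction m with
  | zero => simp [cX_zero]
  | succ m ih => rw [cX_succ, cX_succ, init_not, ih, sg_not]; ring

lemma cY_not (m : ℕ) (σ t : Fin m → Bool) : cY m σ (fun j => !(t j)) = -cY m σ t := by
  induction m with
  | zero => simp [cY_zero]
  | succ m ih => rw [cY_succ, cY_succ, init_not, ih, sg_not]; ring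

lemma cY_shift_not (m : ℕ) (σ t : Fin m → Bool) : cY m (fun j => !(σ j)) t = -cY m σ t := by
  induction m with
  | zero => simp [cY_zero]
  | succ m ih => rw [cY_succ, cY_succ, init_not, ih, wt_not]; ring

lemma abs_cX_lt (m : ℕ) (t : Fin m → Bool) : |cX m t| < 1 := by
  induction m with
  | zero => simp [cX_zero]
  | succ m ih =>
    rw [cX_succ]
    have := abs_lt.1 (ih (Fin.init t))
    rw [abs_lt]
    cases t (Fin.last m) <;> simp only [sg] <;> constructor <;> norm_num <;> linarith

/-- Distinct digit vectors have second coordinates at least `2 ^ (-m)` apart. -/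
lemma cY_sep (m : ℕ) (σ t t' : Fin m → Bool) (h : t ≠ t') :
    2 / 2 ^ m ≤ |cY m σ t - cY m σ t'| := by
  induction m with
  | zero => exact absurd (Subsingleton.elim t t') h
  | succ m ih =>
    rw [cY_succ, cY_succ]
    have hp : (2 : ℝ) / 2 ^ m = 4 * (1 / 2 ^ (m + 1)) := by rw [pow_succ]; field_simp; norm_num
    have hp' : (2 : ℝ) / 2 ^ (m + 1) = 2 * (1 / 2 ^ (m + 1)) := by ring
    have hpos : (0 : ℝ) < 1 / 2 ^ (m + 1) := by positivity
    rw [hp']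
    set e : ℝ := 1 / 2 ^ (m + 1)
    by_cases hi : Fin.init t = Fin.init t'
    · have hl : t (Fin.last m) ≠ t' (Fin.last m) := by
        intro hl
        apply h
        rw [← Fin.snoc_init_self t, ← Fin.snoc_init_self t', hi, hl]
      rw [hi]
      revert hl
      cases t (Fin.last m) <;> cases t' (Fin.last m) <;> intro hl <;> simp at hl <;>
        rcases wt_cases (σ (Fin.last m)) with hw | hw <;> simp only [hw, sg] <;>
        rw [le_abs] <;> norm_num <;> first | (left; linarith) | (right; linarith)
    · have := ih (Fin.init σ) _ _ hi
      rw [hp, le_abs] at this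
      rw [le_abs]
      cases t (Fin.last m) <;> cases t' (Fin.last m) <;>
        rcases wt_cases (σ (Fin.last m)) with hw | hw <;> simp only [hw, sg] <;> norm_num <;>
        rcases this with h1 | h1 <;> first | (left; linarith) | (right; linarith)

/-- A sum over digit vectors, with the last digit split off. -/
lemma sum_split (m : ℕ) (F : (Fin m → Bool) → Bool → ℝ) :
    ∑ t : Fin (m + 1) → Bool, F (Fin.init t) (t (Fin.last m))
      = ∑ t : Fin m → Bool, (F t true + F t false) := by
  rw [← (Fin.snocEquiv (fun _ : Fin (m + 1) => Bool)).sum_comp, Fintype.sum_prod_type,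
    Fintype.sum_bool, ← Finset.sum_add_distrib]
  simp [Fin.snocEquiv]

lemma sum_not (m : ℕ) (F : (Fin m → Bool) → ℝ) :
    ∑ t : Fin m → Bool, F (fun j => !(t j)) = ∑ t, F t :=
  (Equiv.piCongrRight (fun _ : Fin m => Equiv.boolNot)).sum_comp F

/-- A sum over pairs of digit vectors, with both last digits split off. -/
lemma sum_split₂ (m : ℕ) (F : (Fin m → Bool) → Bool → (Fin m → Bool) → Bool → ℝ) :
    ∑ t : Fin (m + 1) → Bool, ∑ t' : Fin (m + 1) → Bool,
        F (Fin.init t) (t (Fin.last m)) (Fin.init t') (t' (Fin.last m))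
      = ∑ t : Fin m → Bool, ∑ t' : Fin m → Bool,
        (F t true t' true + F t false t' false + F t true t' false + F t false t' true) := by
  simp_rw [fun t : Fin (m + 1) → Bool =>
    sum_split m (fun t' b' => F (Fin.init t) (t (Fin.last m)) t' b')]
  rw [sum_split m (fun t b => ∑ t', (F t b t' true + F t b t' false))]
  simp_rw [← Finset.sum_add_distrib]
  refine Finset.sum_congr rfl fun t _ => Finset.sum_congr rfl fun t' _ => by ring

/-! ### Moments and pair sums -/

lemma sum_cX_sq (m : ℕ) : ∑ t, cX m t ^ 2 = (2 ^ m - 1 / 2 ^ m) / 3 := by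
  induction m with
  | zero => simp [cX_zero]
  | succ m ih =>
    simp_rw [cX_succ]
    refine (sum_split m (fun t b => ((cX m t + sg b) / 2) ^ 2)).trans ?_
    have : ∀ t, ((cX m t + sg true) / 2) ^ 2 + ((cX m t + sg false) / 2) ^ 2
        = cX m t ^ 2 / 2 + 1 / 2 := fun t => by simp only [sg]; norm_num; ring
    simp_rw [this, Finset.sum_add_distrib, ← Finset.sum_div]
    rw [ih]
    simp [pow_succ]
    field_simp
    ring

lemma sum_cY_sq (m : ℕ) (σ : Fin m → Bool) :
    ∑ t, cY m σ t ^ 2 = (2 ^ m - 1 / 2 ^ m) / 3 := by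
  induction m with
  | zero => simp [cY_zero]
  | succ m ih =>
    simp_rw [cY_succ]
    set w := wt (σ (Fin.last m)) with hw
    set h : ℝ := 1 / 2 ^ (m + 1) with hh
    refine (sum_split m (fun t b => (cY m (Fin.init σ) t + w * sg b * h) ^ 2)).trans ?_
    have hw2 : w ^ 2 = 1 := by rcases wt_cases (σ (Fin.last m)) with h | h <;> rw [hw, h] <;> norm_num
    have : ∀ t, (cY m (Fin.init σ) t + w * sg true * h) ^ 2
          + (cY m (Fin.init σ) t + w * sg false * h) ^ 2
        = 2 * cY m (Fin.init σ) t ^ 2 + 2 * h ^ 2 := fun t => by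
      simp only [sg]; norm_num; linear_combination 2 * h ^ 2 * hw2
    simp_rw [this, Finset.sum_add_distrib, ← Finset.mul_sum]
    rw [ih]
    simp [pow_succ, hh]
    field_simp
    ring

lemma sum_cX_mul_cY (m : ℕ) (σ : Fin m → Bool) :
    ∑ t, cX m t * cY m σ t = Wsum m σ / 2 := by
  induction m with
  | zero => simp [cX_zero, Wsum]
  | succ m ih =>
    simp_rw [cX_succ, cY_succ]
    rw [Wsum_succ]
    set w := wt (σ (Fin.last m)) with hw
    set h : ℝ := 1 / 2 ^ (m + 1) with hh
    refine (sum_split m (fun t b => (cX m t + sg b) / 2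
      * (cY m (Fin.init σ) t + w * sg b * h))).trans ?_
    have : ∀ t, (cX m t + sg true) / 2 * (cY m (Fin.init σ) t + w * sg true * h)
          + (cX m t + sg false) / 2 * (cY m (Fin.init σ) t + w * sg false * h)
        = cX m t * cY m (Fin.init σ) t + w * h := fun t => by
      simp only [sg]; norm_num; ring
    simp_rw [this, Finset.sum_add_distrib]
    rw [ih]
    simp [pow_succ, hh]
    field_simp

/-- The mixed fourth moment; its dependence on `σ` is the term `W² / (2 * 2 ^ m)`. -/
lemma sum_cX_sq_mul_cY_sq (m : ℕ) (σ : Fin m → Bool) :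
    ∑ t, cX m t ^ 2 * cY m σ t ^ 2 = 2 ^ m / 9 - 2 / (9 * 2 ^ m) + 1 / (9 * (2 ^ m) ^ 3)
      - m / (2 * 2 ^ m) + Wsum m σ ^ 2 / (2 * 2 ^ m) := by
  induction m with
  | zero => simp [cX_zero, Wsum]; norm_num
  | succ m ih =>
    simp_rw [cX_succ, cY_succ]
    rw [Wsum_succ]
    set w := wt (σ (Fin.last m)) with hw
    set h : ℝ := 1 / 2 ^ (m + 1) with hh
    refine (sum_split m (fun t b => ((cX m t + sg b) / 2) ^ 2
      * (cY m (Fin.init σ) t + w * sg b * h) ^ 2)).trans ?_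
    have hw2 : w ^ 2 = 1 := by rcases wt_cases (σ (Fin.last m)) with h | h <;> rw [hw, h] <;> norm_num
    have : ∀ t, ((cX m t + sg true) / 2) ^ 2 * (cY m (Fin.init σ) t + w * sg true * h) ^ 2
          + ((cX m t + sg false) / 2) ^ 2 * (cY m (Fin.init σ) t + w * sg false * h) ^ 2
        = 1 / 2 * (cX m t ^ 2 * cY m (Fin.init σ) t ^ 2) + h ^ 2 / 2 * cX m t ^ 2
          + 1 / 2 * cY m (Fin.init σ) t ^ 2 + 2 * w * h * (cX m t * cY m (Fin.init σ) t)
          + h ^ 2 / 2 := fun t => by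
      simp only [sg]; norm_num; linear_combination h ^ 2 / 2 * (cX m t ^ 2 + 1) * hw2
    simp_rw [this, Finset.sum_add_distrib, ← Finset.mul_sum]
    rw [ih, sum_cX_sq, sum_cY_sq, sum_cX_mul_cY]
    rw [show (Wsum m (Fin.init σ) + w) ^ 2 = Wsum m (Fin.init σ) ^ 2
      + 2 * w * Wsum m (Fin.init σ) + 1 by rw [← hw2]; ring]
    simp [pow_succ, hh]
    field_simp
    ring

lemma abs_cX_sub_lt (m : ℕ) (t t' : Fin m → Bool) : |cX m t - cX m t'| < 2 := by
  have h1 := abs_lt.1 (abs_cX_lt m t)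
  have h2 := abs_lt.1 (abs_cX_lt m t')
  rw [abs_lt]; constructor <;> linarith

lemma abs_add_two {D : ℝ} (hD : |D| < 2) : |D + 2| = 2 + D := by
  rw [abs_of_pos] <;> linarith [abs_lt.1 hD]

lemma abs_sub_two {D : ℝ} (hD : |D| < 2) : |D - 2| = 2 - D := by
  rw [abs_of_neg] <;> linarith [abs_lt.1 hD]

lemma abs_add_sign {E c : ℝ} (h : |c| < |E|) : |E + c| = |E| + Real.sign E * c := by
  rcases lt_trichotomy E 0 with h0 | h0 | h0
  · rw [abs_of_neg h0] at h ⊢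
    rw [Real.sign_of_neg h0, abs_of_neg] <;> linarith [abs_lt.1 h]
  · subst h0; simp at h; linarith [abs_nonneg c]
  · rw [abs_of_pos h0] at h ⊢
    rw [Real.sign_of_pos h0, abs_of_pos] <;> linarith [abs_lt.1 h]

lemma sign_add {E c : ℝ} (h : |c| < |E|) : Real.sign (E + c) = Real.sign E := by
  rcases lt_trichotomy E 0 with h0 | h0 | h0
  · rw [abs_of_neg h0] at h
    rw [Real.sign_of_neg h0, Real.sign_of_neg]; linarith [abs_lt.1 h]
  · subst h0; simp at h; linarith [abs_nonneg c]
  · rw [abs_of_pos h0] at h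
    rw [Real.sign_of_pos h0, Real.sign_of_pos]; linarith [abs_lt.1 h]

lemma sum_abs_cX_sub (m : ℕ) :
    ∑ t, ∑ t', |cX m t - cX m t'| = 2 / 3 * ((2 ^ m) ^ 2 - 1) := by
  induction m with
  | zero => simp
  | succ m ih =>
    simp_rw [cX_succ]
    refine (sum_split₂ m (fun t b t' b' => |(cX m t + sg b) / 2 - (cX m t' + sg b') / 2|)).trans ?_
    have : ∀ t t', |(cX m t + sg true) / 2 - (cX m t' + sg true) / 2|
        + |(cX m t + sg false) / 2 - (cX m t' + sg false) / 2|
        + |(cX m t + sg true) / 2 - (cX m t' + sg false) / 2|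
        + |(cX m t + sg false) / 2 - (cX m t' + sg true) / 2| = |cX m t - cX m t'| + 2 := by
      intro t t'
      have hD := abs_cX_sub_lt m t t'
      set D := cX m t - cX m t' with hDd
      rw [show (cX m t + sg true) / 2 - (cX m t' + sg true) / 2 = D / 2 by ring,
        show (cX m t + sg false) / 2 - (cX m t' + sg false) / 2 = D / 2 by ring,
        show (cX m t + sg true) / 2 - (cX m t' + sg false) / 2 = (D + 2) / 2 by
          simp [sg, hDd]; ring,
        show (cX m t + sg false) / 2 - (cX m t' + sg true) / 2 = (D - 2) / 2 by
          simp [sg, hDd]; ring]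
      simp only [abs_div, abs_two, abs_add_two hD, abs_sub_two hD]
      ring
    simp_rw [this, Finset.sum_add_distrib]
    rw [ih]
    simp [pow_succ]
    ring

/-- The four ways of appending a digit to `t` and `t'` change the difference of second coordinates
by `0`, `0` and `±2h`. -/
lemma cY_diffs (y y' w h : ℝ) :
    (y + w * sg true * h) - (y' + w * sg true * h) = y - y'
    ∧ (y + w * sg false * h) - (y' + w * sg false * h) = y - y'
    ∧ (y + w * sg true * h) - (y' + w * sg false * h) = (y - y') + 2 * w * h
    ∧ (y + w * sg false * h) - (y' + w * sg true * h) = (y - y') + -(2 * w * h) := by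
  refine ⟨?_, ?_, ?_, ?_⟩ <;> simp [sg] <;> ring

lemma cX_diffs (x x' : ℝ) :
    (x + sg true) / 2 - (x' + sg true) / 2 = (x - x') / 2
    ∧ (x + sg false) / 2 - (x' + sg false) / 2 = (x - x') / 2
    ∧ (x + sg true) / 2 - (x' + sg false) / 2 = ((x - x') + 2) / 2
    ∧ (x + sg false) / 2 - (x' + sg true) / 2 = ((x - x') - 2) / 2 := by
  refine ⟨?_, ?_, ?_, ?_⟩ <;> simp [sg] <;> ring

lemma cX_sums (x x' : ℝ) :
    (x + sg true) / 2 + (x' + sg true) / 2 = ((x + x') + 2) / 2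
    ∧ (x + sg false) / 2 + (x' + sg false) / 2 = ((x + x') - 2) / 2
    ∧ (x + sg true) / 2 + (x' + sg false) / 2 = (x + x') / 2
    ∧ (x + sg false) / 2 + (x' + sg true) / 2 = (x + x') / 2 := by
  refine ⟨?_, ?_, ?_, ?_⟩ <;> simp [sg] <;> ring

lemma abs_shift (m : ℕ) (s : Bool) :
    |2 * wt s * (1 / 2 ^ (m + 1))| = 2 * (1 / 2 ^ (m + 1)) := by
  have : (0 : ℝ) < 1 / 2 ^ (m + 1) := by positivity
  rcases wt_cases s with h | h <;> rw [h] <;> simp [abs_mul]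

/-- Unless `t = t'`, the change of `Y - Y'` caused by the last digits is too small to affect its sign. -/
lemma shift_lt (m : ℕ) (s : Bool) (σ t t' : Fin m → Bool) (h : t ≠ t') :
    |2 * wt s * (1 / 2 ^ (m + 1))| < |cY m σ t - cY m σ t'| := by
  rw [abs_shift]
  refine lt_of_lt_of_le ?_ (cY_sep m σ t t' h)
  have : (0 : ℝ) < 2 ^ m := by positivity
  rw [pow_succ]; field_simp; norm_num

lemma sum_abs_cY_sub (m : ℕ) (σ : Fin m → Bool) :
    ∑ t, ∑ t', |cY m σ t - cY m σ t'| = 2 / 3 * ((2 ^ m) ^ 2 - 1) := by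
  induction m with
  | zero => simp
  | succ m ih =>
    simp_rw [cY_succ]
    have hlt := shift_lt m (σ (Fin.last m)) (Fin.init σ)
    have hsh := abs_shift m (σ (Fin.last m))
    set w := wt (σ (Fin.last m)) with hw
    set h : ℝ := 1 / 2 ^ (m + 1) with hh
    refine (sum_split₂ m (fun t b t' b' => |(cY m (Fin.init σ) t + w * sg b * h)
      - (cY m (Fin.init σ) t' + w * sg b' * h)|)).trans ?_
    simp_rw [cY_diffs]
    have : ∀ t t', |cY m (Fin.init σ) t - cY m (Fin.init σ) t'|
        + |cY m (Fin.init σ) t - cY m (Fin.init σ) t'|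
        + |cY m (Fin.init σ) t - cY m (Fin.init σ) t' + 2 * w * h|
        + |cY m (Fin.init σ) t - cY m (Fin.init σ) t' + -(2 * w * h)|
        = 4 * |cY m (Fin.init σ) t - cY m (Fin.init σ) t'| + if t = t' then 4 * h else 0 := by
      intro t t'
      split_ifs with htt
      · subst htt
        simp only [sub_self, zero_add, abs_neg, abs_zero, hsh]; ring
      · rw [abs_add_sign (hlt t t' htt), abs_add_sign (by rw [abs_neg]; exact hlt t t' htt)]
        ring
    simp_rw [this, Finset.sum_add_distrib, ← Finset.mul_sum]
    rw [ih]
    simp [pow_succ, hh]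
    field_simp
    ring

/-- The correlation between `X - X'` and the sign of `Y - Y'`, which drives the recursion for
`sum_abs_mul_abs_sub`. Since `Real.sign 0 = 0`, the diagonal contributes nothing. -/
lemma sum_cX_sub_mul_sign (m : ℕ) (σ : Fin m → Bool) :
    ∑ t, ∑ t', (cX m t - cX m t') * Real.sign (cY m σ t - cY m σ t') = 2 ^ m * Wsum m σ := by
  induction m with
  | zero => simp [Wsum]
  | succ m ih =>
    simp_rw [cX_succ, cY_succ]
    rw [Wsum_succ]
    have hlt := shift_lt m (σ (Fin.last m)) (Fin.init σ)
    have hwc := wt_cases (σ (Fin.last m))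
    set w := wt (σ (Fin.last m)) with hw
    have hpos : (0 : ℝ) < 1 / 2 ^ (m + 1) := by positivity
    set h : ℝ := 1 / 2 ^ (m + 1) with hh
    refine (sum_split₂ m (fun t b t' b' => ((cX m t + sg b) / 2 - (cX m t' + sg b') / 2)
      * Real.sign ((cY m (Fin.init σ) t + w * sg b * h)
      - (cY m (Fin.init σ) t' + w * sg b' * h)))).trans ?_
    simp_rw [cY_diffs, cX_diffs]
    have : ∀ t t',
        (cX m t - cX m t') / 2 * Real.sign (cY m (Fin.init σ) t - cY m (Fin.init σ) t')
        + (cX m t - cX m t') / 2 * Real.sign (cY m (Fin.init σ) t - cY m (Fin.init σ) t')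
        + (cX m t - cX m t' + 2) / 2
          * Real.sign (cY m (Fin.init σ) t - cY m (Fin.init σ) t' + 2 * w * h)
        + (cX m t - cX m t' - 2) / 2
          * Real.sign (cY m (Fin.init σ) t - cY m (Fin.init σ) t' + -(2 * w * h))
        = 2 * ((cX m t - cX m t') * Real.sign (cY m (Fin.init σ) t - cY m (Fin.init σ) t'))
          + if t = t' then 2 * w else 0 := by
      intro t t'
      split_ifs with htt
      · subst htt
        have hs : Real.sign (2 * w * h) = w := by
          rcases hwc with h1 | h1 <;> rw [h1]
          · rw [Real.sign_of_pos]; linarith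
          · rw [Real.sign_of_neg]; linarith
        simp only [sub_self, zero_add, Real.sign_neg, hs, Real.sign_zero]; ring
      · rw [sign_add (hlt t t' htt), sign_add (by rw [abs_neg]; exact hlt t t' htt)]
        ring
    simp_rw [this, Finset.sum_add_distrib, ← Finset.mul_sum]
    rw [ih]
    simp [pow_succ]
    ring

/-- The pair sum for points of the same shift; it depends on `σ` through the term `W² / 2`. -/
lemma sum_abs_mul_abs_sub (m : ℕ) (σ : Fin m → Bool) :
    ∑ t, ∑ t', |cX m t - cX m t'| * |cY m σ t - cY m σ t'|
      = 4 / 9 * ((2 ^ m) ^ 2 - 1) + m / 6 + Wsum m σ ^ 2 / 2 := by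
  induction m with
  | zero => simp [Wsum]
  | succ m ih =>
    simp_rw [cX_succ, cY_succ]
    rw [Wsum_succ]
    have hlt := shift_lt m (σ (Fin.last m)) (Fin.init σ)
    have hsh := abs_shift m (σ (Fin.last m))
    have hw2 : wt (σ (Fin.last m)) ^ 2 = 1 := by
      rcases wt_cases (σ (Fin.last m)) with h | h <;> rw [h] <;> norm_num
    set w := wt (σ (Fin.last m)) with hw
    set h : ℝ := 1 / 2 ^ (m + 1) with hh
    refine (sum_split₂ m (fun t b t' b' => |(cX m t + sg b) / 2 - (cX m t' + sg b') / 2|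
      * |(cY m (Fin.init σ) t + w * sg b * h) - (cY m (Fin.init σ) t' + w * sg b' * h)|)).trans ?_
    simp_rw [cY_diffs, cX_diffs]
    have : ∀ t t',
        |(cX m t - cX m t') / 2| * |cY m (Fin.init σ) t - cY m (Fin.init σ) t'|
        + |(cX m t - cX m t') / 2| * |cY m (Fin.init σ) t - cY m (Fin.init σ) t'|
        + |(cX m t - cX m t' + 2) / 2|
          * |cY m (Fin.init σ) t - cY m (Fin.init σ) t' + 2 * w * h|
        + |(cX m t - cX m t' - 2) / 2|
          * |cY m (Fin.init σ) t - cY m (Fin.init σ) t' + -(2 * w * h)|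
        = |cX m t - cX m t'| * |cY m (Fin.init σ) t - cY m (Fin.init σ) t'|
          + 2 * |cY m (Fin.init σ) t - cY m (Fin.init σ) t'|
          + 2 * w * h
            * ((cX m t - cX m t') * Real.sign (cY m (Fin.init σ) t - cY m (Fin.init σ) t'))
          + if t = t' then 4 * h else 0 := by
      intro t t'
      have hD := abs_cX_sub_lt m t t'
      simp only [abs_div, abs_two, abs_add_two hD, abs_sub_two hD]
      split_ifs with htt
      · subst htt
        simp only [sub_self, zero_add, abs_neg, abs_zero, hsh]; ring
      · rw [abs_add_sign (hlt t t' htt), abs_add_sign (by rw [abs_neg]; exact hlt t t' htt)]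
        ring
    simp_rw [this, Finset.sum_add_distrib, ← Finset.mul_sum]
    rw [ih, sum_abs_cY_sub, sum_cX_sub_mul_sign]
    rw [show (Wsum m (Fin.init σ) + w) ^ 2 = Wsum m (Fin.init σ) ^ 2
      + 2 * w * Wsum m (Fin.init σ) + 1 by rw [← hw2]; ring]
    simp [pow_succ, hh]
    field_simp
    ring

lemma sum_abs_cX (m : ℕ) : ∑ t, |cX (m + 1) t| = 2 ^ m := by
  simp_rw [cX_succ]
  refine (sum_split m (fun t b => |(cX m t + sg b) / 2|)).trans ?_
  have : ∀ t, |(cX m t + sg true) / 2| + |(cX m t + sg false) / 2| = 1 := by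
    intro t
    have := abs_lt.1 (abs_cX_lt m t)
    simp only [sg]
    rw [abs_of_pos, abs_of_neg] <;> norm_num <;> linarith
  simp [this]

/-- The pair sum for points of opposite shifts. The number of digits is taken positive: the formula
fails for `m = 0`, where `∑ |X|` vanishes instead of being `2 ^ (m - 1)`. -/
lemma sum_abs_add_mul_abs_sub (m : ℕ) (σ : Fin (m + 1) → Bool) :
    ∑ t, ∑ t', |cX (m + 1) t + cX (m + 1) t'| * |cY (m + 1) σ t - cY (m + 1) σ t'|
      = 4 / 9 * ((2 ^ (m + 1)) ^ 2 - 1) - (m + 1) / 3 - 1 := by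
  -- The recursion holds for every `m`; only its initial value at `m = 0` is exceptional.
  have step : ∀ m (σ : Fin (m + 1) → Bool),
      ∑ t, ∑ t', |cX (m + 1) t + cX (m + 1) t'| * |cY (m + 1) σ t - cY (m + 1) σ t'|
      = ∑ t, ∑ t', |cX m t + cX m t'| * |cY m (Fin.init σ) t - cY m (Fin.init σ) t'|
        + 4 / 3 * ((2 ^ m) ^ 2 - 1) + 2 / 2 ^ m * ∑ t, |cX m t| := by
    intro m σ
    simp_rw [cX_succ, cY_succ]
    have hlt := shift_lt m (σ (Fin.last m)) (Fin.init σ)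
    have hsh := abs_shift m (σ (Fin.last m))
    set w := wt (σ (Fin.last m)) with hw
    set h : ℝ := 1 / 2 ^ (m + 1) with hh
    refine (sum_split₂ m (fun t b t' b' => |(cX m t + sg b) / 2 + (cX m t' + sg b') / 2|
      * |(cY m (Fin.init σ) t + w * sg b * h) - (cY m (Fin.init σ) t' + w * sg b' * h)|)).trans ?_
    simp_rw [cY_diffs, cX_sums]
    have : ∀ t t',
        |(cX m t + cX m t' + 2) / 2| * |cY m (Fin.init σ) t - cY m (Fin.init σ) t'|
        + |(cX m t + cX m t' - 2) / 2| * |cY m (Fin.init σ) t - cY m (Fin.init σ) t'|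
        + |(cX m t + cX m t') / 2|
          * |cY m (Fin.init σ) t - cY m (Fin.init σ) t' + 2 * w * h|
        + |(cX m t + cX m t') / 2|
          * |cY m (Fin.init σ) t - cY m (Fin.init σ) t' + -(2 * w * h)|
        = |cX m t + cX m t'| * |cY m (Fin.init σ) t - cY m (Fin.init σ) t'|
          + 2 * |cY m (Fin.init σ) t - cY m (Fin.init σ) t'|
          + if t = t' then 4 * h * |cX m t| else 0 := by
      intro t t'
      have hD : |cX m t + cX m t'| < 2 := by
        have := abs_cX_sub_lt m t (fun j => !(t' j))
        rwa [cX_not, sub_neg_eq_add] at this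
      simp only [abs_div, abs_two, abs_add_two hD, abs_sub_two hD]
      split_ifs with htt
      · subst htt
        simp only [sub_self, zero_add, abs_neg, abs_zero, hsh, ← two_mul, abs_mul, abs_two]; ring
      · have hneg : |-(2 * w * h)| < |cY m (Fin.init σ) t - cY m (Fin.init σ) t'| := by
          rw [abs_neg]; exact hlt t t' htt
        rw [abs_add_sign (hlt t t' htt), abs_add_sign hneg]
        ring
    simp_rw [this, Finset.sum_add_distrib, ← Finset.mul_sum]
    rw [sum_abs_cY_sub]
    simp only [Finset.sum_ite_eq, Finset.mem_univ, if_true, ← Finset.mul_sum]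
    rw [hh, pow_succ]
    field_simp
    ring
  induction m with
  | zero => rw [step]; simp [cX_zero, cY_zero]; norm_num
  | succ m ih =>
    rw [step, ih, sum_abs_cX]
    push_cast
    simp only [pow_succ]
    field_simp
    ring

/-! ### Warnock's formula -/

open MeasureTheory in
/-- The integral of the square of a sum of products of one-variable functions. -/
lemma integral_sq_sum_mul {ι : Type*} [Fintype ι] (f g : ι → ℝ → ℝ)
    (hf : ∀ i j, IntervalIntegrable (fun a => f i a * f j a) volume 0 1)
    (hg : ∀ i j, IntervalIntegrable (fun b => g i b * g j b) volume 0 1) :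
    ∫ a in (0:ℝ)..1, ∫ b in (0:ℝ)..1, (∑ i, f i a * g i b) ^ 2
      = ∑ i, ∑ j, (∫ a in (0:ℝ)..1, f i a * f j a) * ∫ b in (0:ℝ)..1, g i b * g j b := by
  have inner : ∀ a, ∫ b in (0:ℝ)..1, (∑ i, f i a * g i b) ^ 2
      = ∑ i, ∑ j, (f i a * f j a) * ∫ b in (0:ℝ)..1, g i b * g j b := by
    intro a
    have : ∀ b, (∑ i, f i a * g i b) ^ 2 = ∑ i, ∑ j, (f i a * f j a) * (g i b * g j b) := by
      intro b
      rw [sq, Finset.sum_mul_sum]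
      exact Finset.sum_congr rfl fun i _ => Finset.sum_congr rfl fun j _ => by ring
    simp_rw [this]
    rw [intervalIntegral.integral_finsetSum
      (fun i _ => by
        have := IntervalIntegrable.sum Finset.univ (fun j _ => (hg i j).const_mul (f i a * f j a))
        simpa only [Finset.sum_apply, Finset.sum_fn] using this)]
    refine Finset.sum_congr rfl fun i _ => ?_
    rw [intervalIntegral.integral_finsetSum (fun j _ => (hg i j).const_mul _)]
    exact Finset.sum_congr rfl fun j _ => intervalIntegral.integral_const_mul _ _
  simp_rw [inner]
  rw [intervalIntegral.integral_finsetSum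
      (fun i _ => by
        have := IntervalIntegrable.sum Finset.univ
          (fun j _ => (hf i j).mul_const (∫ b in (0:ℝ)..1, g i b * g j b))
        simpa only [Finset.sum_apply, Finset.sum_fn] using this)]
  refine Finset.sum_congr rfl fun i _ => ?_
  rw [intervalIntegral.integral_finsetSum (fun j _ => (hf i j).mul_const _)]
  exact Finset.sum_congr rfl fun j _ => intervalIntegral.integral_mul_const _ _

open MeasureTheory in
lemma integral_step {x : ℝ} (hx : x ∈ Set.Icc (0:ℝ) 1) {φ : ℝ → ℝ} (hφ : Continuous φ) :
    IntervalIntegrable (fun a => if x < a then φ a else 0) volume 0 1 ∧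
    ∫ a in (0:ℝ)..1, (if x < a then φ a else 0) = ∫ a in x..1, φ a := by
  have e1 : Set.EqOn (fun _ : ℝ => (0:ℝ)) (fun a => if x < a then φ a else 0)
      (Set.uIoo 0 x) := by
    intro a ha
    rw [Set.uIoo_of_le hx.1] at ha
    simp [not_lt.2 ha.2.le]
  have e2 : Set.EqOn φ (fun a => if x < a then φ a else 0) (Set.uIoo x 1) := by
    intro a ha
    rw [Set.uIoo_of_le hx.2] at ha
    simp [ha.1]
  have i1 : IntervalIntegrable (fun a => if x < a then φ a else 0) volume 0 x :=
    IntervalIntegrable.congr_uIoo (by simp) e1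
  have i2 : IntervalIntegrable (fun a => if x < a then φ a else 0) volume x 1 :=
    IntervalIntegrable.congr_uIoo (hφ.intervalIntegrable _ _) e2
  refine ⟨i1.trans i2, ?_⟩
  rw [← intervalIntegral.integral_add_adjacent_intervals i1 i2,
    ← intervalIntegral.integral_congr_uIoo e1, ← intervalIntegral.integral_congr_uIoo e2]
  simp

/-- The one-variable factors of the local discrepancy: the steps `1_{x k < a}`, and at `none` the
linear factor `n * a` of the volume term. -/
noncomputable def stepFn {κ : Type*} (x : κ → ℝ) (n : ℝ) : Option κ → ℝ → ℝ
  | none, a => n * a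
  | some k, a => if x k < a then 1 else 0

lemma stepFn_mul {κ : Type*} {x : κ → ℝ} (hx : ∀ k, x k ∈ Set.Icc (0:ℝ) 1) (n : ℝ) :
    (∀ i j, IntervalIntegrable (fun a => stepFn x n i a * stepFn x n j a)
      MeasureTheory.volume 0 1)
    ∧ (∫ a in (0:ℝ)..1, stepFn x n none a * stepFn x n none a) = n ^ 2 / 3
    ∧ (∀ k, ∫ a in (0:ℝ)..1, stepFn x n none a * stepFn x n (some k) a = n * (1 - x k ^ 2) / 2)
    ∧ (∀ k, ∫ a in (0:ℝ)..1, stepFn x n (some k) a * stepFn x n none a = n * (1 - x k ^ 2) / 2)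
    ∧ (∀ k l, ∫ a in (0:ℝ)..1, stepFn x n (some k) a * stepFn x n (some l) a
        = 1 - max (x k) (x l)) := by
  have hlin : Continuous fun a : ℝ => n * a := by fun_prop
  have e1 : ∀ k, (fun a => stepFn x n none a * stepFn x n (some k) a)
      = fun a => if x k < a then n * a else 0 := by
    intro k; funext a; simp [stepFn]
  have e1' : ∀ k, (fun a => stepFn x n (some k) a * stepFn x n none a)
      = fun a => if x k < a then n * a else 0 := by
    intro k; funext a; simp [stepFn]
  have e2 : ∀ k l, (fun a => stepFn x n (some k) a * stepFn x n (some l) a)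
      = fun a => if max (x k) (x l) < a then 1 else 0 := by
    intro k l; funext a
    by_cases h1 : x k < a <;> by_cases h2 : x l < a <;> simp [stepFn, h1, h2]
  have hm : ∀ k l, max (x k) (x l) ∈ Set.Icc (0:ℝ) 1 := fun k l =>
    ⟨(hx k).1.trans (le_max_left _ _), max_le (hx k).2 (hx l).2⟩
  refine ⟨?_, ?_, ?_, ?_, ?_⟩
  · rintro (_ | k) (_ | l)
    · apply Continuous.intervalIntegrable; simp only [stepFn]; fun_prop
    · rw [e1]; exact (integral_step (hx l) hlin).1
    · rw [e1']; exact (integral_step (hx k) hlin).1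
    · rw [e2]; exact (integral_step (hm k l) continuous_const).1
  · have : (fun a => stepFn x n none a * stepFn x n none a) = fun a => n ^ 2 * a ^ 2 := by
      funext a; simp only [stepFn]; ring
    rw [this, intervalIntegral.integral_const_mul, integral_pow]
    norm_num; ring
  · intro k
    rw [e1, (integral_step (hx k) hlin).2, intervalIntegral.integral_const_mul, integral_id]
    ring
  · intro k
    rw [e1', (integral_step (hx k) hlin).2, intervalIntegral.integral_const_mul, integral_id]
    ring
  · intro k l
    rw [e2, (integral_step (hm k l) continuous_const).2]
    simp

/-- Warnock's formula for the `L₂` discrepancy of a finite family of points of `[0, 1]²`. -/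
lemma warnock {κ : Type*} [Fintype κ] (x y : κ → ℝ) (hx : ∀ k, x k ∈ Set.Icc (0:ℝ) 1)
    (hy : ∀ k, y k ∈ Set.Icc (0:ℝ) 1) (n : ℝ) :
    ∫ a in (0:ℝ)..1, ∫ b in (0:ℝ)..1,
        ((∑ k, (if x k < a then 1 else 0) * (if y k < b then 1 else 0)) - n * a * b) ^ 2
      = (∑ k, ∑ l, (1 - max (x k) (x l)) * (1 - max (y k) (y l)))
        - n / 2 * (∑ k, (1 - x k ^ 2) * (1 - y k ^ 2)) + n ^ 2 / 9 := by
  obtain ⟨fi, f1, f2, f3, f4⟩ := stepFn_mul hx (-n)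
  obtain ⟨gi, g1, g2, g3, g4⟩ := stepFn_mul hy 1
  have key := integral_sq_sum_mul (stepFn x (-n)) (stepFn y 1) fi gi
  simp only [Fintype.sum_option, f1, f2, f3, f4, g1, g2, g3, g4, Finset.sum_add_distrib] at key
  have h1 : ∀ a b : ℝ, ((∑ k, (if x k < a then (1:ℝ) else 0) * (if y k < b then 1 else 0))
      - n * a * b) = stepFn x (-n) none a * stepFn y 1 none b
        + ∑ k, stepFn x (-n) (some k) a * stepFn y 1 (some k) b := by
    intro a b; simp only [stepFn]; ring
  simp_rw [h1]
  rw [key, Finset.mul_sum]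
  have h2 : ∑ k, -n * (1 - x k ^ 2) / 2 * (1 * (1 - y k ^ 2) / 2)
      = -(∑ k, n / 2 * ((1 - x k ^ 2) * (1 - y k ^ 2))) / 2 := by
    rw [neg_div, Finset.sum_div, ← Finset.sum_neg_distrib]
    exact Finset.sum_congr rfl fun k _ => by ring
  rw [h2]
  ring

/-! ### The symmetrized Hammersley set -/

lemma hamX_eq (m : ℕ) (t : Fin m → Bool) : hamX m t = (1 - 1 / 2 ^ m + cX m t) / 2 := by
  unfold cX; ring

lemma hamY_eq (m : ℕ) (σ t : Fin m → Bool) :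
    hamY m σ t = (1 - 1 / 2 ^ m + cY m σ t) / 2 := by
  unfold cY; ring

lemma bitr_nonneg (b : Bool) : 0 ≤ bitr b := by cases b <;> simp [bitr]

lemma hamX_mem (m : ℕ) (t : Fin m → Bool) : hamX m t ∈ Set.Icc (0:ℝ) 1 := by
  constructor
  · exact Finset.sum_nonneg fun j _ => div_nonneg (bitr_nonneg _) (by positivity)
  · rw [hamX_eq]
    have : (0:ℝ) < 1 / 2 ^ m := by positivity
    linarith [abs_lt.1 (abs_cX_lt m t)]

lemma hamY_mem (m : ℕ) (σ t : Fin m → Bool) : hamY m σ t ∈ Set.Icc (0:ℝ) 1 := by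
  have hn : ∀ t, 0 ≤ hamY m σ t := fun t =>
    Finset.sum_nonneg fun j _ => div_nonneg (bitr_nonneg _) (by positivity)
  refine ⟨hn t, ?_⟩
  -- The reflected point has nonnegative coordinate `1 - 2⁻ᵐ - y`.
  have h1 := hn (fun j => !(t j))
  rw [hamY_eq, cY_not] at h1
  rw [hamY_eq]
  have : (0:ℝ) < 1 / 2 ^ m := by positivity
  linarith

lemma max_eq_abs (x y : ℝ) : max x y = (x + y + |x - y|) / 2 := by
  rcases le_total x y with h | h
  · rw [max_eq_right h, abs_of_nonpos (by linarith)]; ring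
  · rw [max_eq_left h, abs_of_nonneg (by linarith)]; ring

/-- Second coordinates of the symmetrized set: `true` selects `σ`, `false` selects `σ*`. -/
noncomputable def symY (m : ℕ) (σ : Fin m → Bool) (p : (Fin m → Bool) × Bool) : ℝ :=
  hamY m (if p.2 then σ else fun j => !(σ j)) p.1

lemma one_sub_max (a X X' : ℝ) : 1 - max ((1 - a + X) / 2) ((1 - a + X') / 2)
    = (1 + a) / 2 - (X + X' + |X - X'|) / 4 := by
  rw [max_eq_abs, show (1 - a + X) / 2 - (1 - a + X') / 2 = (X - X') / 2 by ring, abs_div, abs_two]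
  ring

/-- The pair sum in Warnock's formula for the symmetrized point set. -/
lemma sum_kernel (m : ℕ) (σ : Fin (m + 1) → Bool) :
    ∑ p : (Fin (m + 1) → Bool) × Bool, ∑ q : (Fin (m + 1) → Bool) × Bool,
      (1 - max (hamX (m + 1) p.1) (hamX (m + 1) q.1))
        * (1 - max (symY (m + 1) σ p) (symY (m + 1) σ q))
    = (1 + 1 / 2 ^ (m + 1)) ^ 2 * (2 ^ (m + 1)) ^ 2
      - (1 + 1 / 2 ^ (m + 1)) * (2 / 3 * ((2 ^ (m + 1)) ^ 2 - 1))
      + (8 / 9 * ((2 ^ (m + 1)) ^ 2 - 1) - (m + 1) / 6 - 1 + Wsum (m + 1) σ ^ 2 / 2) / 8 := by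
  have gx := sum_abs_cX_sub (m + 1)
  have gy := sum_abs_cY_sub (m + 1) σ
  have t1 := sum_abs_mul_abs_sub (m + 1) σ
  have t2 := sum_abs_add_mul_abs_sub m σ
  have hn : ((m + 1 : ℕ) : ℝ) = m + 1 := by push_cast; rfl
  rw [hn] at t1
  clear hn
  generalize m + 1 = n at *
  -- Replacing `t'` by its complement turns `Y + Y'` into `Y - Y'` and `X - X'` into `X + X'`.
  have gy' : ∑ t, ∑ t', |cY n σ t + cY n σ t'| = 2 / 3 * ((2 ^ n) ^ 2 - 1) := by
    rw [← gy]
    refine Finset.sum_congr rfl fun t _ => ?_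
    rw [← sum_not]
    simp only [cY_not, ← sub_eq_add_neg]
  have t2' : ∑ t, ∑ t', |cX n t - cX n t'| * |cY n σ t + cY n σ t'|
      = 4 / 9 * ((2 ^ n) ^ 2 - 1) - (m + 1) / 3 - 1 := by
    rw [← t2]
    refine Finset.sum_congr rfl fun t _ => ?_
    rw [← sum_not]
    simp only [cY_not, cX_not, ← sub_eq_add_neg, sub_neg_eq_add]
  set c : ℝ := (1 + 1 / 2 ^ n) / 2 with hc
  -- The terms odd under complementing both `t` and `t'` cancel.
  have odd : ∑ t, ∑ t', (cX n t + cX n t')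
      * (4 * c - (|cY n σ t - cY n σ t'| + |cY n σ t + cY n σ t'|) / 2) = 0 := by
    have h : ∑ t, ∑ t', (cX n t + cX n t')
          * (4 * c - (|cY n σ t - cY n σ t'| + |cY n σ t + cY n σ t'|) / 2)
        = -∑ t, ∑ t', (cX n t + cX n t')
          * (4 * c - (|cY n σ t - cY n σ t'| + |cY n σ t + cY n σ t'|) / 2) := by
      conv_lhs => rw [← sum_not]
      rw [← Finset.sum_neg_distrib]
      refine Finset.sum_congr rfl fun t _ => ?_
      rw [← sum_not, ← Finset.sum_neg_distrib]
      refine Finset.sum_congr rfl fun t' _ => ?_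
      simp only [cX_not, cY_not]
      rw [show -cY n σ t - -cY n σ t' = -(cY n σ t - cY n σ t') by ring,
        show -cY n σ t + -cY n σ t' = -(cY n σ t + cY n σ t') by ring, abs_neg, abs_neg]
      ring
    linarith
  have expand : ∑ p : (Fin n → Bool) × Bool, ∑ q : (Fin n → Bool) × Bool,
      (1 - max (hamX n p.1) (hamX n q.1)) * (1 - max (symY n σ p) (symY n σ q))
      = ∑ t, ∑ t', (4 * c ^ 2 - c * |cX n t - cX n t'| - c / 2 * |cY n σ t - cY n σ t'|
        - c / 2 * |cY n σ t + cY n σ t'| + 1 / 8 * (|cX n t - cX n t'| * |cY n σ t - cY n σ t'|)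
        + 1 / 8 * (|cX n t - cX n t'| * |cY n σ t + cY n σ t'|)
        - 1 / 4 * ((cX n t + cX n t')
          * (4 * c - (|cY n σ t - cY n σ t'| + |cY n σ t + cY n σ t'|) / 2))) := by
    rw [Fintype.sum_prod_type]
    refine Finset.sum_congr rfl fun t _ => ?_
    rw [Fintype.sum_bool, Fintype.sum_prod_type, Fintype.sum_prod_type, ← Finset.sum_add_distrib]
    refine Finset.sum_congr rfl fun t' _ => ?_
    simp only [Fintype.sum_bool, symY, if_true, Bool.false_eq_true, if_false, hamX_eq, hamY_eq,
      cY_shift_not, one_sub_max]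
    rw [show -cY n σ t - -cY n σ t' = -(cY n σ t - cY n σ t') by ring,
      show -cY n σ t - cY n σ t' = -(cY n σ t + cY n σ t') by ring,
      sub_neg_eq_add, abs_neg, abs_neg, ← hc]
    ring
  rw [expand]
  simp_rw [Finset.sum_sub_distrib, Finset.sum_add_distrib, Finset.sum_sub_distrib,
    ← Finset.mul_sum]
  rw [odd, gx, gy, gy', t1, t2']
  simp [hc]
  ring

/-- The single sum in Warnock's formula for the symmetrized point set. -/
lemma sum_quad (m : ℕ) (σ : Fin m → Bool) :
    ∑ p : (Fin m → Bool) × Bool, (1 - hamX m p.1 ^ 2) * (1 - symY m σ p ^ 2)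
    = 2 * 2 ^ m * (1 - ((1 - 1 / 2 ^ m) / 2) ^ 2) ^ 2
      - (1 - ((1 - 1 / 2 ^ m) / 2) ^ 2) * ((2 ^ m - 1 / 2 ^ m) / 3)
      + (2 ^ m / 9 - 2 / (9 * 2 ^ m) + 1 / (9 * (2 ^ m) ^ 3)
      - m / (2 * 2 ^ m) + Wsum m σ ^ 2 / (2 * 2 ^ m)) / 8 := by
  -- The part of the summand that is odd under complementing the digits sums to `0`.
  have hX := sum_not m (fun t => cX m t * (1 - ((1 - 1 / 2 ^ m) / 2) ^ 2 - cY m σ t ^ 2 / 4))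
  simp only [cX_not, cY_not, neg_sq, neg_mul, Finset.sum_neg_distrib] at hX
  have hX0 : ∑ t, cX m t * (1 - ((1 - 1 / 2 ^ m) / 2) ^ 2 - cY m σ t ^ 2 / 4) = 0 := by linarith
  -- Averaging over the two shifts removes the terms odd in `Y`.
  rw [← sum_cX_sq_mul_cY_sq m σ, Fintype.sum_prod_type]
  set a : ℝ := (1 - 1 / 2 ^ m) / 2 with ha
  have : ∀ t, ∑ b : Bool, (1 - hamX m (t, b).1 ^ 2) * (1 - symY m σ (t, b) ^ 2)
      = 2 * (1 - a ^ 2) ^ 2 - (1 - a ^ 2) / 2 * (cX m t ^ 2) - (1 - a ^ 2) / 2 * (cY m σ t ^ 2)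
        + 1 / 8 * (cX m t ^ 2 * cY m σ t ^ 2)
        - 2 * a * (cX m t * (1 - a ^ 2 - cY m σ t ^ 2 / 4)) := by
    intro t
    simp only [Fintype.sum_bool, symY, if_true, Bool.false_eq_true, if_false, hamX_eq, hamY_eq,
      cY_shift_not, ha]
    ring
  simp_rw [this, Finset.sum_sub_distrib, Finset.sum_add_distrib, Finset.sum_sub_distrib,
    ← Finset.mul_sum]
  rw [hX0, sum_cX_sq, sum_cY_sq]
  simp
  ring

/-- The squared `L₂` norm of the local discrepancy. The multiples of `W²` in `sum_kernel` and
`sum_quad` cancel here. -/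
lemma integral_sym (m : ℕ) (σ : Fin (m + 1) → Bool) :
    ∫ α in (0:ℝ)..1, ∫ β in (0:ℝ)..1, (Δsym (m + 1) σ α β) ^ 2
      = (m + 2) / 24 + 4 / 3 + 1 / 2 ^ (m + 1) - 1 / (18 * (2 ^ (m + 1)) ^ 2) := by
  have h : ∀ α β, Δsym (m + 1) σ α β
      = (∑ p : (Fin (m + 1) → Bool) × Bool, (if hamX (m + 1) p.1 < α then (1:ℝ) else 0)
          * (if symY (m + 1) σ p < β then 1 else 0)) - 2 ^ (m + 1 + 1) * α * β := by
    intro α β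
    rw [Δsym, Fintype.sum_prod_type]
    simp only [Fintype.sum_bool, symY, if_true, Bool.false_eq_true, if_false,
      Finset.sum_add_distrib, Finset.card_filter, Nat.cast_sum, ite_and, Nat.cast_ite,
      Nat.cast_one, Nat.cast_zero, ite_mul, one_mul, zero_mul]
  simp_rw [h]
  rw [warnock (fun p : (Fin (m + 1) → Bool) × Bool => hamX (m + 1) p.1) (symY (m + 1) σ)
    (fun p => hamX_mem _ _) (fun p => hamY_mem _ _ _), sum_kernel, sum_quad]
  have : (2:ℝ) ^ (m + 1) ≠ 0 := by positivity
  rw [pow_succ 2 (m + 1)]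
  generalize (2:ℝ) ^ (m + 1) = M at *
  push_cast
  field_simp
  ring

theorem stmt11 (m : ℕ) (hm : 1 ≤ m) (σ : Fin m → Bool) (N : ℝ) (hN : N = 2 ^ (m + 1)) :
    (1 / N) * Real.sqrt (∫ α in (0:ℝ)..1, ∫ β in (0:ℝ)..1, (Δsym m σ α β) ^ 2)
      = (1 / N) * Real.sqrt (Real.log N / (24 * Real.log 2) + 4 / 3 + 2 / N
          - 2 / (9 * N ^ 2)) := by
  obtain ⟨k, rfl⟩ : ∃ k, m = k + 1 := ⟨m - 1, by omega⟩
  have hlog : Real.log 2 ≠ 0 := (Real.log_pos one_lt_two).ne'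
  rw [integral_sym, hN, Real.log_pow, pow_succ 2 (k + 1)]
  have : (2:ℝ) ^ (k + 1) ≠ 0 := by positivity
  congr 2
  push_cast
  field_simp
  ring
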